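/- arXiv:2412.00583 — 10 statements merged into one kernel-verified Lean document; each statement's English description precedes it below -/
import Mathlib

section
/- Let (χ_k)_{k∈ℕ} be a sequence of characters of N and χ a character of N such that χ_k(n) → χ(n) in Circle for every n ∈ N. Then eventually the stabilizers are contained in the stabilizer of the limit: there exists K ∈ ℕ such that for all k ≥ K, G_{χ_k} ≤ G_χ. (Proposition 4.12.) -/
/-! A single `g ∉ G_χ` lies outside `G_{χ_k}` for all large `k`: some `n` has `χ (g⁻¹ n g) ≠ χ n`,
and distinct limits in a Hausdorff space force the sequences to differ eventually
(`eventually_mem_charStab_imp`). Since `N` is abelian, every stabilizer contains `N`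
(`le_charStab`), so membership in a stabilizer depends only on the coset of `g` in `G ⧸ N`. There
are finitely many cosets, so one threshold works for all `g`. -/

open Filter Topology

variable {G : Type*} [Group G]

/-- For a normal subgroup `N` and `g : G`, `g⁻¹ * n * g ∈ N`. -/
theorem conj_mem_of_normal (N : Subgroup G) [hN : N.Normal] (g : G) (n : N) :
    g⁻¹ * (n : G) * g ∈ N :=
  hN.conj_mem' (n : G) n.2 g

/-- The stabilizer `G_χ = {g : G | χ (g⁻¹ n g) = χ n for all n ∈ N}` of a character
`χ : N → Circle` under the conjugation action of `G`, as a subgroup of `G`. -/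
def charStab (N : Subgroup G) [N.Normal] (χ : N →* Circle) : Subgroup G where
  carrier := {g : G | ∀ n : N, χ ⟨g⁻¹ * (n : G) * g, conj_mem_of_normal N g n⟩ = χ n}
  one_mem' := by
    intro n
    have : (⟨(1 : G)⁻¹ * (n : G) * 1, conj_mem_of_normal N 1 n⟩ : N) = n :=
      Subtype.ext (by group)
    rw [this]
  mul_mem' := by
    intro a b ha hb n
    have h1 : (⟨(a * b)⁻¹ * (n : G) * (a * b), conj_mem_of_normal N (a * b) n⟩ : N)
        = ⟨b⁻¹ * ((⟨a⁻¹ * (n : G) * a, conj_mem_of_normal N a n⟩ : N) : G) * b,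
            conj_mem_of_normal N b _⟩ :=
      Subtype.ext (by group)
    rw [h1, hb, ha]
  inv_mem' := by
    intro a ha n
    set m : N := ⟨a * (n : G) * a⁻¹, by simpa using conj_mem_of_normal N a⁻¹ n⟩ with hm
    have h1 := ha m
    have h2 : (⟨a⁻¹ * (m : G) * a, conj_mem_of_normal N a m⟩ : N) = n :=
      Subtype.ext (by rw [hm]; group)
    rw [h2] at h1
    have h3 : (⟨(a⁻¹)⁻¹ * (n : G) * a⁻¹, conj_mem_of_normal N a⁻¹ n⟩ : N) = m :=
      Subtype.ext (by rw [hm]; group)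
    rw [h3, h1]

theorem le_charStab (N : Subgroup G) [N.Normal] (habelian : ∀ x y : N, x * y = y * x)
    (χ : N →* Circle) : N ≤ charStab N χ := by
  intro g hg n
  have h : (⟨g⁻¹ * (n : G) * g, conj_mem_of_normal N g n⟩ : N) = n := by
    apply Subtype.ext
    have h1 : (n : G) * g = g * n := congrArg Subtype.val (habelian n ⟨g, hg⟩)
    change g⁻¹ * (n : G) * g = n
    rw [mul_assoc, h1, inv_mul_cancel_left]
  rw [h]

theorem eventually_mem_charStab_imp (N : Subgroup G) [N.Normal]
    (χs : ℕ → (N →* Circle)) (χ : N →* Circle)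
    (hconv : ∀ n : N, Tendsto (fun k => χs k n) atTop (𝓝 (χ n))) (g : G) :
    ∀ᶠ k in atTop, g ∈ charStab N (χs k) → g ∈ charStab N χ := by
  by_cases hg : g ∈ charStab N χ
  · exact Eventually.of_forall fun _ _ => hg
  · obtain ⟨n, hn⟩ : ∃ n : N, χ ⟨g⁻¹ * (n : G) * g, conj_mem_of_normal N g n⟩ ≠ χ n :=
      not_forall.mp hg
    by_contra hev
    refine hn (tendsto_nhds_unique_of_frequently_eq (hconv _) (hconv n) ?_)
    exact (not_eventually.mp hev).mono fun k hk => (Classical.not_imp.mp hk).1 n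

/-- **Proposition 4.12.** Let `N` be a finitely generated abelian normal subgroup of
finite index in `G` (the setting of a crystallographic group), and let `(χ_k)` be a
sequence of characters of `N` converging pointwise to a character `χ`.  Then eventually
the stabilizers are contained in the stabilizer of the limit: there exists `K` such that
`G_{χ_k} ≤ G_χ` for all `k ≥ K`. -/
theorem stabilizers_eventually_le_of_tendsto
    (N : Subgroup G) [N.Normal] (habelian : ∀ x y : N, x * y = y * x)
    (hfg : N.FG) [N.FiniteIndex]
    (χs : ℕ → (N →* Circle)) (χ : N →* Circle)
    (hconv : ∀ n : N, Tendsto (fun k => χs k n) atTop (𝓝 (χ n))) :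
    ∃ K : ℕ, ∀ k ≥ K, charStab N (χs k) ≤ charStab N χ := by
  have hcosets : ∀ᶠ k in atTop, ∀ q : G ⧸ N,
      q.out ∈ charStab N (χs k) → q.out ∈ charStab N χ :=
    eventually_all.mpr fun q => eventually_mem_charStab_imp N χs χ hconv q.out
  obtain ⟨K, hK⟩ := eventually_atTop.mp hcosets
  refine ⟨K, fun k hk g hg => ?_⟩
  -- `g` and the chosen representative of its coset differ by an element of `N`
  obtain ⟨n, hn⟩ := QuotientGroup.mk_out_eq_mul N g
  have h := hK k hk (g : G ⧸ N)
  rw [hn] at h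
  exact ((charStab N χ).mul_mem_cancel_right (le_charStab N habelian χ n.2)).mp
    (h (mul_mem hg (le_charStab N habelian (χs k) n.2)))
end

section
/- Let (χ_k)_{k∈ℕ} be a sequence of characters of N and χ a character of N such that χ_k(n) → χ(n) in Circle for every n ∈ N. Then eventually the orbit size of χ divides the orbit size of χ_k: there exists K ∈ ℕ such that for all k ≥ K, the index [G : G_χ] divides the index [G : G_{χ_k}] (these indices are finite, since the stabilizers contain the finite-index subgroup N, and equal the orbit sizes |𝒪_χ| and |𝒪_{χ_k}| of the natural G-action on characters). (Corollary 4.13.) -/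
/-!
For all large `k` the stabilizer of `χ_k` is contained in the stabilizer of `χ`, so the index
of the latter divides the index of the former. Indeed, not stabilizing `χ` is witnessed by an
inequality `χ (g⁻¹ n g) ≠ χ n` at a single `n`, which persists for `χ_k` with `k` large
(`eventually_mem_charStab_imp`). Both stabilizers contain `N` (`le_charStab`), because `N` is
abelian, so it suffices to consider one `g` from each of the finitely many cosets of `N`.
-/


open Filter Topology

variable {G : Type*} [Group G]

/-- **Corollary 4.13.** Let `N` be a finitely generated abelian normal subgroup of finite
index in `G`, and let `(χ_k)` be a sequence of characters of `N` converging pointwise to a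
character `χ`.  Then eventually the orbit size of `χ` divides the orbit size of `χ_k`:
there exists `K` such that `[G : G_χ] ∣ [G : G_{χ_k}]` for all `k ≥ K` (these indices are
the orbit sizes `|𝒪_χ|` and `|𝒪_{χ_k}|` of the natural `G`-action on characters). -/
theorem orbit_size_eventually_dvd_of_tendsto
    (N : Subgroup G) [N.Normal] (habelian : ∀ x y : N, x * y = y * x)
    (hfg : N.FG) [N.FiniteIndex]
    (χs : ℕ → (N →* Circle)) (χ : N →* Circle)
    (hconv : ∀ n : N, Tendsto (fun k => χs k n) atTop (𝓝 (χ n))) :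
    ∃ K : ℕ, ∀ k ≥ K, (charStab N χ).index ∣ (charStab N (χs k)).index := by
  have hall : ∀ᶠ k in atTop, ∀ q : G ⧸ N,
      q.out ∈ charStab N (χs k) → q.out ∈ charStab N χ :=
    eventually_all.mpr fun q => eventually_mem_charStab_imp N χs χ hconv q.out
  obtain ⟨K, hK⟩ := eventually_atTop.mp hall
  refine ⟨K, fun k hk => Subgroup.index_dvd_of_le fun g hg => ?_⟩
  obtain ⟨n, hn⟩ := QuotientGroup.mk_out_eq_mul N g
  have hout := hK k hk (g : G ⧸ N)
  rw [hn, Subgroup.mul_mem_cancel_right _ (le_charStab N habelian _ n.2),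
    Subgroup.mul_mem_cancel_right _ (le_charStab N habelian _ n.2)] at hout
  exact hout hg
end

section
/- Let D_* be a subgroup of D = G/N and let (χ_k)_{k∈ℕ} be a sequence of characters of N, each stabilized by D_* (i.e., χ_k(γ(d)⁻¹ n γ(d)) = χ_k(n) for all d ∈ D_* and n ∈ N), such that χ_k(n) → 1 in Circle for every n ∈ N. Then the sequence is eventually cohomologically trivial over D_*: there exists K ∈ ℕ such that for every k ≥ K the 2-cocycle ω_k(h,l) := conj(χ_k(ν(h,l))) on D_* is a 2-coboundary, i.e., there is a function λ : D_* → Circle with λ(1) = 1 and ω_k(h,l) = λ(hl)·λ(h)⁻¹·λ(l)⁻¹ for all h, l ∈ D_*. (Proposition 3.17.) -/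
open Filter Topology

variable {G : Type*} [Group G]

/-!
The values `χ_k (ν (h, l))` are finitely many, so for large `k` all of them have argument of
absolute value less than `π / 2`. The multiplicative cocycle identity involves four such
values; the corresponding alternating sum of arguments is a multiple of `2π` of absolute value
less than `2π`, hence zero. The arguments therefore form a genuine real-valued `2`-cocycle on
the finite group `D_*`. Averaging a real cocycle over its last variable exhibits it as a
coboundary, and exponentiating gives `λ`. The lift to `ℝ` and the averaging are in
`coboundary_of_small_cocycle`.
-/

lemma eventually_abs_arg_lt : ∀ᶠ z : Circle in 𝓝 1, |Complex.arg (z : ℂ)| < Real.pi / 2 := by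
  have hc : ContinuousAt (fun z : Circle => |Complex.arg (z : ℂ)|) 1 := by
    refine ContinuousAt.abs (ContinuousAt.comp (f := fun z : Circle => (z : ℂ))
      (g := Complex.arg) (Complex.continuousAt_arg ?_) (by fun_prop))
    simp [Complex.one_mem_slitPlane]
  refine hc.eventually_lt continuousAt_const ?_
  simp [Real.pi_pos]

/-- A normalized circle-valued `2`-cocycle on a finite group whose values all lie in the open
right half-plane is a coboundary: its argument is a real cocycle, which is the coboundary of
its average over the second variable. -/
lemma coboundary_of_small_cocycle {H : Type*} [Group H] [Finite H] (ω : H → H → Circle)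
    (hω : ∀ h l m, ω (h * l) m * ω h l = ω h (l * m) * ω l m) (hω1 : ω 1 1 = 1)
    (hsmall : ∀ h l, |Complex.arg (ω h l : ℂ)| < Real.pi / 2) :
    ∃ lam : H → Circle, lam 1 = 1 ∧
      ∀ h l, (ω h l)⁻¹ = lam (h * l) * (lam h)⁻¹ * (lam l)⁻¹ := by
  have := Fintype.ofFinite H
  set θ : H → H → ℝ := fun h l => Complex.arg (ω h l : ℂ) with hθ
  have hexp : ∀ h l, Circle.exp (θ h l) = ω h l := fun h l => Circle.exp_arg _
  have hcoc : ∀ h l m, θ (h * l) m + θ h l = θ h (l * m) + θ l m := by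
    intro h l m
    have h1 : Circle.exp (θ (h * l) m + θ h l) = Circle.exp (θ h (l * m) + θ l m) := by
      simp only [Circle.exp_add, hexp, hω]
    obtain ⟨n, hn⟩ := Circle.exp_eq_exp.mp h1
    have a1 := abs_lt.mp (hsmall (h * l) m)
    have a2 := abs_lt.mp (hsmall h l)
    have a3 := abs_lt.mp (hsmall h (l * m))
    have a4 := abs_lt.mp (hsmall l m)
    simp only [hθ] at hn ⊢
    have hpi := Real.pi_pos
    have hlt : (n : ℝ) < 1 := by
      by_contra! hc
      nlinarith
    have hgt : (-1 : ℝ) < n := by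
      by_contra! hc
      nlinarith
    have hn0 : n = 0 := by
      have b1 : n < 1 := by exact_mod_cast hlt
      have b2 : -1 < n := by exact_mod_cast hgt
      omega
    simpa [hn0] using hn
  set L : H → ℝ := fun h => (∑ m, θ h m) / Fintype.card H with hL
  have hcard : (Fintype.card H : ℝ) ≠ 0 := by exact_mod_cast Fintype.card_ne_zero
  have hLθ : ∀ h l, θ h l = L h + L l - L (h * l) := by
    intro h l
    have hs := Finset.sum_congr (rfl : (Finset.univ : Finset H) = Finset.univ)
      fun m _ => hcoc h l m
    -- Translation by `l` permutes the group, so the sum of `θ h (l * m)` is that of `θ h m`.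
    rw [Finset.sum_add_distrib, Finset.sum_add_distrib,
      Fintype.sum_equiv (Equiv.mulLeft l) (fun m => θ h (l * m)) (fun m => θ h m)
        (fun _ => rfl)] at hs
    simp only [Finset.sum_const, Finset.card_univ, nsmul_eq_mul] at hs
    simp only [hL]
    field_simp
    linarith
  refine ⟨fun h => Circle.exp (L h), ?_, fun h l => ?_⟩
  · have h1 := hLθ 1 1
    have h2 : θ 1 1 = 0 := by simp [hθ, hω1]
    have h3 : L 1 = 0 := by
      rw [mul_one] at h1
      linarith
    simp [h3]
  · rw [← hexp, ← Circle.exp_neg, ← Circle.exp_neg, ← Circle.exp_neg, ← Circle.exp_add,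
      ← Circle.exp_add, hLθ]
    congr 1
    ring

/-- **Proposition 3.17.** Let `N` be a finitely generated abelian normal subgroup of
finite index in `G` with point group `D = G ⧸ N`, let `γ : D → G` be a normalized section
of the quotient map, with factor set `ν(h,l) = γ(hl)⁻¹ γ(h) γ(l) ∈ N`, and let `D_*` be a
subgroup of `D`.  Let `(χ_k)` be a sequence of characters of `N`, each stabilized by
`D_*`, with `χ_k → 𝟙` pointwise.  Then the sequence is eventually cohomologically trivial
over `D_*`: there is a `K` such that for every `k ≥ K` the `2`-cocycle
`ω_k(h,l) = conj (χ_k (ν (h,l)))` is a `2`-coboundary on `D_*`, i.e. there is a normalized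
`λ : D_* → Circle` with `ω_k(h,l) = λ(hl) λ(h)⁻¹ λ(l)⁻¹`.  (On the unit circle,
`conj z = z⁻¹`.) -/
theorem eventually_cohomologically_trivial
    (N : Subgroup G) [N.Normal] (habelian : ∀ x y : N, x * y = y * x)
    (hfg : N.FG) [N.FiniteIndex]
    (γ : G ⧸ N → G) (hγ : ∀ d : G ⧸ N, ((γ d : G) : G ⧸ N) = d) (hγ1 : γ 1 = 1)
    (hν : ∀ h l : G ⧸ N, (γ (h * l))⁻¹ * γ h * γ l ∈ N)
    (Dstar : Subgroup (G ⧸ N))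
    (χs : ℕ → (N →* Circle))
    (hstab : ∀ (k : ℕ), ∀ d ∈ Dstar, ∀ n : N,
      χs k ⟨(γ d)⁻¹ * (n : G) * γ d, conj_mem_of_normal N (γ d) n⟩ = χs k n)
    (hconv : ∀ n : N, Tendsto (fun k => χs k n) atTop (𝓝 1)) :
    ∃ K : ℕ, ∀ k ≥ K, ∃ lam : Dstar → Circle, lam 1 = 1 ∧
      ∀ h l : Dstar,
        (χs k ⟨(γ ((h : G ⧸ N) * (l : G ⧸ N)))⁻¹ * γ (h : G ⧸ N) * γ (l : G ⧸ N),
            hν (h : G ⧸ N) (l : G ⧸ N)⟩)⁻¹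
          = lam (h * l) * (lam h)⁻¹ * (lam l)⁻¹ := by
  have : Finite (G ⧸ N) := Subgroup.finite_quotient_of_finiteIndex
  have hev : ∀ᶠ k in atTop, ∀ h l : Dstar, |Complex.arg (χs k ⟨(γ ((h : G ⧸ N) *
      (l : G ⧸ N)))⁻¹ * γ (h : G ⧸ N) * γ (l : G ⧸ N), hν h l⟩ : ℂ)| < Real.pi / 2 := by
    rw [eventually_all]; intro h
    rw [eventually_all]; intro l
    exact (hconv _).eventually eventually_abs_arg_lt
  obtain ⟨K, hK⟩ := eventually_atTop.mp hev
  refine ⟨K, fun k hk => ?_⟩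
  refine coboundary_of_small_cocycle
    (fun h l : Dstar => χs k ⟨(γ ((h : G ⧸ N) * (l : G ⧸ N)))⁻¹ * γ (h : G ⧸ N) *
      γ (l : G ⧸ N), hν h l⟩) ?_ ?_ (hK k hk)
  · intro h l m
    -- Both sides come from `γ h * γ l * γ m`; conjugating `ν (h, l)` past `γ m` does not
    -- change the value of the character.
    rw [← hstab k m m.2 ⟨(γ ((h : G ⧸ N) * (l : G ⧸ N)))⁻¹ * γ (h : G ⧸ N) * γ (l : G ⧸ N),
      hν h l⟩, ← map_mul, ← map_mul]
    congr 1
    apply Subtype.ext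
    simp only [Subgroup.coe_mul, mul_assoc]
    group
  · rw [← map_one (χs k)]
    congr 1
    apply Subtype.ext
    simp [hγ1]
end

section
/- Let D_* be a subgroup of D = G/N and let (χ_k)_{k∈ℕ} be a sequence of characters of N, each stabilized by D_* (χ_k(γ(d)⁻¹ n γ(d)) = χ_k(n) for all d ∈ D_*, n ∈ N), converging pointwise to a character χ of N (so χ is automatically also stabilized by D_*). Then the sequence χ_k is eventually cohomologous to χ over D_*: there exists K ∈ ℕ such that for every k ≥ K there is a function λ : D_* → Circle with λ(1) = 1 and conj(χ_k(ν(h,l))) · χ(ν(h,l)) = λ(hl)·λ(h)⁻¹·λ(l)⁻¹ for all h, l ∈ D_* (that is, ω_{χ_k}·ω_χ⁻¹ is a 2-coboundary on D_*, where ω_ψ(h,l) = conj(ψ(ν(h,l)))). (Corollary 3.18.) -/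
/-!
The characters `ψ k = (χs k)⁻¹ * χ` are stabilized by `Dstar` (the limit `χ` is, by uniqueness
of limits), so `(h, l) ↦ ψ k (ν (h, l))` is a `2`-cocycle on `Dstar` for the trivial action on
the circle. As `G ⧸ N` is finite, only finitely many elements `ν (h, l)` occur, so for large `k`
all values of this cocycle have argument in `(-π/2, π/2)`. The argument of such a cocycle is
again a cocycle, now with values in `ℝ`: the four-term relation holds modulo `2π` and its defect
has absolute value less than `2π`. A real cocycle on a finite group is a coboundary by averaging,
and exponentiating this gives the claim (`isCoboundary_of_small_arg`).
-/

open Filter Topology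

variable {G : Type*} [Group G]

/-- A normalized circle-valued `2`-cocycle on a finite group, all of whose values lie in the open
right half-plane, is a `2`-coboundary. -/
theorem isCoboundary_of_small_arg {H : Type*} [Group H] [Finite H] (c : H → H → Circle)
    (hc1 : ∀ m, c 1 m = 1)
    (hc : ∀ h l m, c (h * l) m * c h l = c h (l * m) * c l m)
    (hsmall : ∀ h l, |Complex.arg (c h l : ℂ)| < Real.pi / 2) :
    ∃ lam : H → Circle, lam 1 = 1 ∧
      ∀ h l, c h l = lam (h * l) * (lam h)⁻¹ * (lam l)⁻¹ := by
  have := Fintype.ofFinite H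
  set a : H → H → ℝ := fun h l => Complex.arg (c h l : ℂ) with ha
  have hexp : ∀ h l, Circle.exp (a h l) = c h l := fun h l => Circle.exp_arg _
  have hcoc : ∀ h l m, a (h * l) m + a h l = a h (l * m) + a l m := by
    intro h l m
    have h1 : Circle.exp (a (h * l) m + a h l) = Circle.exp (a h (l * m) + a l m) := by
      simp only [Circle.exp_add, hexp, hc]
    obtain ⟨n, hn⟩ := Circle.exp_eq_exp.1 h1
    have b1 := abs_lt.1 (hsmall (h * l) m)
    have b2 := abs_lt.1 (hsmall h l)
    have b3 := abs_lt.1 (hsmall h (l * m))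
    have b4 := abs_lt.1 (hsmall l m)
    simp only [ha] at hn ⊢
    have hpi := Real.pi_pos
    have n1 : (n : ℝ) < 1 := by
      by_contra hcon
      nlinarith
    have n2 : (-1 : ℝ) < n := by
      by_contra hcon
      nlinarith
    have n0 : n = 0 := by
      have n1' : n < 1 := by exact_mod_cast n1
      have n2' : -1 < n := by exact_mod_cast n2
      omega
    simpa [n0] using hn
  have hcard : (Fintype.card H : ℝ) ≠ 0 := by
    exact_mod_cast Fintype.card_ne_zero
  set S : H → ℝ := fun h => ∑ m, a h m with hS
  -- Summing the cocycle relation over `m` expresses `a` through the row sums `S`.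
  have hsum : ∀ h l, S (h * l) + Fintype.card H * a h l = S h + S l := by
    intro h l
    have h1 : ∑ m, (a (h * l) m + a h l) = ∑ m, (a h (l * m) + a l m) :=
      Finset.sum_congr rfl fun m _ => hcoc h l m
    have h2 : ∑ m, a h (l * m) = ∑ m, a h m := Equiv.sum_comp (Equiv.mulLeft l) (a h)
    simpa [Finset.sum_add_distrib, h2] using h1
  refine ⟨fun h => Circle.exp (-(S h / Fintype.card H)), ?_, ?_⟩
  · simp [hS, ha, hc1]
  · intro h l
    rw [← hexp, ← Circle.exp_neg, ← Circle.exp_neg, ← Circle.exp_add, ← Circle.exp_add]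
    congr 1
    have := hsum h l
    field_simp
    linarith

/-- For a character `ψ` fixed under conjugation by `γ m`, the composite `ψ ∘ ν` satisfies the
`2`-cocycle relation at `(h, l, m)`. -/
theorem factorSet_cocycle (N : Subgroup G) [N.Normal] (γ : G ⧸ N → G)
    (hν : ∀ h l : G ⧸ N, (γ (h * l))⁻¹ * γ h * γ l ∈ N) (ψ : N →* Circle)
    (h l m : G ⧸ N)
    (hψ : ∀ n : N, ψ ⟨(γ m)⁻¹ * (n : G) * γ m, conj_mem_of_normal N (γ m) n⟩ = ψ n) :
    ψ ⟨_, hν (h * l) m⟩ * ψ ⟨_, hν h l⟩ = ψ ⟨_, hν h (l * m)⟩ * ψ ⟨_, hν l m⟩ := by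
  rw [← hψ ⟨_, hν h l⟩, ← map_mul, ← map_mul]
  congr 1
  ext
  simp only [Subgroup.coe_mul, mul_assoc h l m]
  group

/-- **Corollary 3.18.** Let `N` be a finitely generated abelian normal subgroup of finite
index in `G` with point group `D = G ⧸ N`, let `γ : D → G` be a normalized section of the
quotient map, with factor set `ν(h,l) = γ(hl)⁻¹ γ(h) γ(l) ∈ N`, and let `D_*` be a
subgroup of `D`.  Let `(χ_k)` be a sequence of characters of `N`, each stabilized by
`D_*`, converging pointwise to a character `χ`.  Then the `χ_k` are eventually
cohomologous to `χ` over `D_*`: there is a `K` such that for every `k ≥ K` the quotient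
cocycle `ω_{χ_k} ω_χ⁻¹ : (h,l) ↦ conj (χ_k (ν (h,l))) ⬝ χ (ν (h,l))` is a `2`-coboundary
on `D_*`.  (On the unit circle, `conj z = z⁻¹`.) -/
theorem eventually_cohomologous
    (N : Subgroup G) [N.Normal] (habelian : ∀ x y : N, x * y = y * x)
    (hfg : N.FG) [N.FiniteIndex]
    (γ : G ⧸ N → G) (hγ : ∀ d : G ⧸ N, ((γ d : G) : G ⧸ N) = d) (hγ1 : γ 1 = 1)
    (hν : ∀ h l : G ⧸ N, (γ (h * l))⁻¹ * γ h * γ l ∈ N)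
    (Dstar : Subgroup (G ⧸ N))
    (χs : ℕ → (N →* Circle)) (χ : N →* Circle)
    (hstab : ∀ (k : ℕ), ∀ d ∈ Dstar, ∀ n : N,
      χs k ⟨(γ d)⁻¹ * (n : G) * γ d, conj_mem_of_normal N (γ d) n⟩ = χs k n)
    (hconv : ∀ n : N, Tendsto (fun k => χs k n) atTop (𝓝 (χ n))) :
    ∃ K : ℕ, ∀ k ≥ K, ∃ lam : Dstar → Circle, lam 1 = 1 ∧
      ∀ h l : Dstar,
        (χs k ⟨(γ ((h : G ⧸ N) * (l : G ⧸ N)))⁻¹ * γ (h : G ⧸ N) * γ (l : G ⧸ N),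
            hν (h : G ⧸ N) (l : G ⧸ N)⟩)⁻¹
          * χ ⟨(γ ((h : G ⧸ N) * (l : G ⧸ N)))⁻¹ * γ (h : G ⧸ N) * γ (l : G ⧸ N),
              hν (h : G ⧸ N) (l : G ⧸ N)⟩
          = lam (h * l) * (lam h)⁻¹ * (lam l)⁻¹ := by
  have hχ : ∀ d ∈ Dstar, ∀ n : N,
      χ ⟨(γ d)⁻¹ * (n : G) * γ d, conj_mem_of_normal N (γ d) n⟩ = χ n := by
    intro d hd n
    refine tendsto_nhds_unique (hconv _) ?_
    simpa only [hstab _ d hd n] using hconv n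
  have hev : ∀ᶠ k in atTop, ∀ h l : G ⧸ N,
      |Complex.arg (((χs k ⟨_, hν h l⟩)⁻¹ * χ ⟨_, hν h l⟩ : Circle) : ℂ)| < Real.pi / 2 := by
    rw [eventually_all]
    intro h
    rw [eventually_all]
    intro l
    have h1 : Tendsto (fun k => (χs k ⟨_, hν h l⟩)⁻¹ * χ ⟨_, hν h l⟩) atTop (𝓝 1) := by
      simpa using (hconv ⟨_, hν h l⟩).inv.mul_const (χ ⟨_, hν h l⟩)
    have h2 : ContinuousAt (fun z : Circle => |Complex.arg (z : ℂ)|) 1 := by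
      refine ContinuousAt.abs (ContinuousAt.comp (g := Complex.arg) ?_
        continuous_subtype_val.continuousAt)
      exact Complex.continuousAt_arg (by simp)
    refine (h2.tendsto.comp h1).eventually_lt_const ?_
    simp [Real.pi_pos]
  obtain ⟨K, hK⟩ := eventually_atTop.1 hev
  refine ⟨K, fun k hk => ?_⟩
  refine isCoboundary_of_small_arg
    (fun h l : Dstar => (χs k ⟨_, hν (h : G ⧸ N) (l : G ⧸ N)⟩)⁻¹ * χ ⟨_, hν h l⟩) ?_ ?_ ?_
  · intro m
    have h1 : (⟨_, hν ((1 : Dstar) : G ⧸ N) m⟩ : N) = 1 := by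
      ext
      simp [hγ1]
    simp only [h1, map_one, inv_one, mul_one]
  · intro h l m
    refine factorSet_cocycle N γ hν ((χs k)⁻¹ * χ) h l m fun n => ?_
    simp only [MonoidHom.mul_apply, MonoidHom.inv_apply, hstab k m m.2, hχ m m.2]
  · exact fun h l => hK k hk h l
end

section
/- Fix k ∈ ℕ and let h : [0,1] → Hom(N, Circle) be a path of characters of N such that for every n ∈ N the map t ↦ h(t)(n) is continuous on the unit interval, and suppose that for every t ∈ [0,1] the stabilizer G_{h(t)} has index exactly k in G (i.e., h takes values in the set N̂_k of characters whose G-orbit has size k). Then the stabilizer is constant along the path: G_{h(s)} = G_{h(t)} for all s, t ∈ [0,1]. In particular, if two characters χ, χ' ∈ N̂_k are k-path connected (joined by a continuous path inside N̂_k), then G_χ = G_{χ'}. (Proposition 4.17.) -/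
/-!
For each `g : G` the set of `t` with `g ∈ G_{h t}` is closed, and since `N` is abelian it only
depends on the coset `gN`. As `G ⧸ N` is finite, `G_{h t} ≤ G_{h s}` for all `t` near `s`
(`eventually_charStab_le`). Both subgroups have the same finite index `k`, so this inclusion is an
equality. Hence `t ↦ G_{h t}` is locally constant, and it is constant since the unit interval is
connected.
-/

open Filter Topology

variable {G : Type*} [Group G]

theorem isClosed_setOf_mem_charStab (N : Subgroup G) [N.Normal] {X : Type*} [TopologicalSpace X]
    (h : X → (N →* Circle)) (hcont : ∀ n : N, Continuous fun t : X => h t n) (g : G) :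
    IsClosed {t : X | g ∈ charStab N (h t)} := by
  have hset : {t : X | g ∈ charStab N (h t)} =
      ⋂ n : N, {t | h t ⟨g⁻¹ * (n : G) * g, conj_mem_of_normal N g n⟩ = h t n} := by
    ext t
    simp only [Set.mem_iInter]
    rfl
  rw [hset]
  exact isClosed_iInter fun n => isClosed_eq (hcont _) (hcont n)

/-- Upper semicontinuity of the stabilizer: failing to stabilize is an open condition, and only
finitely many cosets of `N` have to be tested. -/
theorem eventually_charStab_le (N : Subgroup G) [N.Normal] (habelian : ∀ x y : N, x * y = y * x)
    [N.FiniteIndex] {X : Type*} [TopologicalSpace X]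
    (h : X → (N →* Circle)) (hcont : ∀ n : N, Continuous fun t : X => h t n) (s : X) :
    ∀ᶠ t in 𝓝 s, charStab N (h t) ≤ charStab N (h s) := by
  have hev : ∀ᶠ t in 𝓝 s, ∀ q : G ⧸ N,
      q.out ∈ charStab N (h t) → q.out ∈ charStab N (h s) := by
    refine eventually_all.2 fun q => ?_
    by_cases hq : q.out ∈ charStab N (h s)
    · exact Eventually.of_forall fun _ _ => hq
    · filter_upwards [(isClosed_setOf_mem_charStab N h hcont q.out).isOpen_compl.mem_nhds hq]
        with t ht ht'
      exact absurd ht' ht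
  filter_upwards [hev] with t ht g hg
  obtain ⟨n, hn⟩ := QuotientGroup.mk_out_eq_mul N g
  have hmem : ∀ r : X, (n : G) ∈ charStab N (h r) := fun r => le_charStab N habelian (h r) n.2
  have hout := ht (g : G ⧸ N)
  rw [hn, Subgroup.mul_mem_cancel_right _ (hmem t), Subgroup.mul_mem_cancel_right _ (hmem s)]
    at hout
  exact hout hg

/-- **Proposition 4.17.** Fix `k` and let `h : [0,1] → N̂` be a pointwise-continuous path
of characters of `N` (a finitely generated abelian normal subgroup of finite index in
`G`) such that every `h t` lies in `N̂_k`, i.e. its stabilizer `G_{h t}` has index exactly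
`k` in `G`.  Then the stabilizer is constant along the path: `G_{h s} = G_{h t}` for all
`s, t ∈ [0,1]`.  In particular `k`-path-connected characters have the same stabilizer. -/
theorem stabilizer_constant_along_path
    (N : Subgroup G) [N.Normal] (habelian : ∀ x y : N, x * y = y * x)
    (hfg : N.FG) [N.FiniteIndex]
    (k : ℕ) (h : unitInterval → (N →* Circle))
    (hcont : ∀ n : N, Continuous fun t : unitInterval => h t n)
    (horbit : ∀ t : unitInterval, (charStab N (h t)).index = k) :
    ∀ s t : unitInterval, charStab N (h s) = charStab N (h t) := by
  refine fun s t => IsLocallyConstant.apply_eq_of_preconnectedSpace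
    (f := fun t => charStab N (h t)) ((IsLocallyConstant.iff_eventually_eq _).2 fun s => ?_) s t
  filter_upwards [eventually_charStab_le N habelian h hcont s] with t hle
  have : (charStab N (h t)).FiniteIndex :=
    Subgroup.finiteIndex_of_le (le_charStab N habelian (h t))
  by_contra hne
  exact (Subgroup.index_strictAnti (lt_of_le_of_ne hle hne)).ne
    ((horbit s).trans (horbit t).symm)
end

section
/- Fix k ∈ ℕ and let h : [0,1] → Hom(N, Circle) be a path of characters of N such that for every n ∈ N the map t ↦ h(t)(n) is continuous on the unit interval, and suppose that for every t ∈ [0,1] the stabilizer G_{h(t)} has index exactly k in G. Let D_* ≤ D = G/N be the stabilizer of h(0) in D (which coincides with the stabilizer of h(1), since the stabilizers agree along the path). Then the 2-cocycles ω_{h(0)} and ω_{h(1)} are cohomologous over D_*: there exists λ : D_* → Circle with λ(1) = 1 such that conj(h(1)(ν(d,e))) · h(0)(ν(d,e)) = λ(de)·λ(d)⁻¹·λ(e)⁻¹ for all d, e ∈ D_*. In particular, k-path-connected characters are cohomologous over their shared stabilizer. (Corollary 4.18.) -/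
/-!
The stabilizers `charStab N (h t)` contain `N`, so they are determined by the finitely many
representatives `γ d`. Each condition `γ d ∈ charStab N (h t)` is closed in `t`, so stabilizers can
only shrink near a given point; having equal finite index, they are locally constant, hence
constant (`charStab_path_const`).

Lifting the paths `t ↦ h t n / h 0 n` through the covering `Circle.exp : ℝ → Circle` from `0` gives,
by uniqueness of lifts, an additive map `ψ : N → ℝ`, invariant under the common stabilizer, with
`Circle.exp (ψ n) = h 1 n / h 0 n` (`exists_real_lift`). The real cocycle `ψ ∘ ν` on the finite group
`D_*` is a coboundary by averaging (`exists_coboundary_of_cocycle`), and exponentiating the bounding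
cochain yields `λ`.
-/

open Filter Topology

variable {G : Type*} [Group G]

theorem isClosed_mem_charStab (N : Subgroup G) [N.Normal] (h : unitInterval → (N →* Circle))
    (hcont : ∀ n : N, Continuous fun t : unitInterval => h t n) (g : G) :
    IsClosed {t | g ∈ charStab N (h t)} := by
  have : {t | g ∈ charStab N (h t)} =
      ⋂ n : N, {t | h t ⟨g⁻¹ * (n : G) * g, conj_mem_of_normal N g n⟩ = h t n} := by
    ext t
    simp only [Set.mem_ofPred_eq, Set.mem_iInter]
    rfl
  rw [this]
  exact isClosed_iInter fun n => isClosed_eq (hcont _) (hcont _)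

/-- Stabilizers of constant index along a continuous path of characters are constant. -/
theorem charStab_path_const (N : Subgroup G) [N.Normal] (habelian : ∀ x y : N, x * y = y * x)
    [N.FiniteIndex] (k : ℕ) (h : unitInterval → (N →* Circle))
    (hcont : ∀ n : N, Continuous fun t : unitInterval => h t n)
    (horbit : ∀ t : unitInterval, (charStab N (h t)).index = k) (s t : unitInterval) :
    charStab N (h s) = charStab N (h t) := by
  have hloc : IsLocallyConstant fun t => charStab N (h t) := by
    rw [IsLocallyConstant.iff_eventually_eq]
    intro t
    have hev : ∀ᶠ s in 𝓝 t, ∀ d : G ⧸ N,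
        d.out ∈ charStab N (h s) → d.out ∈ charStab N (h t) := by
      rw [eventually_all]
      intro d
      by_cases hd : d.out ∈ charStab N (h t)
      · exact Eventually.of_forall fun _ _ => hd
      · filter_upwards [(isClosed_mem_charStab N h hcont d.out).isOpen_compl.mem_nhds hd]
          with s hs hs'
        exact absurd hs' hs
    filter_upwards [hev] with s hs
    have hle : charStab N (h s) ≤ charStab N (h t) := by
      intro g hg
      have hmem : g⁻¹ * (g : G ⧸ N).out ∈ N :=
        QuotientGroup.eq.1 (QuotientGroup.out_eq' (g : G ⧸ N)).symm
      have h1 := hs g (by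
        have := mul_mem hg (le_charStab N habelian (h s) hmem)
        rwa [mul_inv_cancel_left] at this)
      have h2 := mul_mem h1 (inv_mem (le_charStab N habelian (h t) hmem))
      simpa using h2
    have : (charStab N (h s)).FiniteIndex :=
      Subgroup.finiteIndex_of_le (le_charStab N habelian (h s))
    by_contra hne
    have hlt := Subgroup.index_strictAnti (lt_of_le_of_ne hle hne)
    rw [horbit, horbit] at hlt
    exact lt_irrefl _ hlt
  exact hloc.apply_eq_of_preconnectedSpace s t

/-- The logarithm of `h 1 / h 0` obtained by continuous lifting along the path; uniqueness of lifts
makes it additive and invariant under every element stabilizing all the `h t`. -/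
theorem exists_real_lift (N : Subgroup G) [N.Normal] (h : unitInterval → (N →* Circle))
    (hcont : ∀ n : N, Continuous fun t : unitInterval => h t n) :
    ∃ ψ : N → ℝ, (∀ n, Circle.exp (ψ n) = h 1 n * (h 0 n)⁻¹) ∧
      (∀ m n, ψ (m * n) = ψ m + ψ n) ∧
      ∀ g : G, (∀ t, g ∈ charStab N (h t)) →
        ∀ n : N, ψ ⟨g⁻¹ * (n : G) * g, conj_mem_of_normal N g n⟩ = ψ n := by
  have hlift : ∀ n : N, ∃ Γ : C(unitInterval, ℝ),
      (∀ t, Circle.exp (Γ t) = h t n * (h 0 n)⁻¹) ∧ Γ 0 = 0 := by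
    intro n
    obtain ⟨Γ, h1, h2⟩ := Circle.isCoveringMap_exp.exists_path_lifts
      (⟨fun t => h t n * (h 0 n)⁻¹, (hcont n).mul continuous_const⟩ : C(unitInterval, Circle))
      0 (by simp)
    exact ⟨Γ, fun t => congrFun h1 t, h2⟩
  choose Γ hΓ hΓ0 using hlift
  refine ⟨fun n => Γ n 1, fun n => hΓ n 1, fun m n => ?_, fun g hg n => ?_⟩
  · have : (fun t => Γ (m * n) t) = fun t => Γ m t + Γ n t := by
      refine Circle.isCoveringMap_exp.eq_of_comp_eq (Γ _).continuous
        ((Γ m).continuous.add (Γ n).continuous) ?_ 0 (by simp [hΓ0])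
      funext t
      simp only [Function.comp_apply, Circle.exp_add, hΓ, map_mul, mul_inv]
      exact mul_mul_mul_comm _ _ _ _
    exact congrFun this 1
  · have : (fun t => Γ ⟨g⁻¹ * (n : G) * g, conj_mem_of_normal N g n⟩ t) = fun t => Γ n t := by
      refine Circle.isCoveringMap_exp.eq_of_comp_eq (Γ _).continuous (Γ n).continuous ?_ 0
        (by simp [hΓ0])
      funext t
      simp only [Function.comp_apply, hΓ]
      rw [hg t n, hg 0 n]
    exact congrFun this 1

/-- A real-valued cocycle over a finite subgroup is a coboundary, by averaging over the last
variable. -/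
theorem exists_coboundary_of_cocycle {Q : Type*} [Group Q] [Finite Q] (H : Subgroup Q)
    (c : Q → Q → ℝ) (hc1 : ∀ x, c 1 x = 0)
    (hc : ∀ x y, ∀ z ∈ H, c (x * y) z + c x y = c x (y * z) + c y z) :
    ∃ F : Q → ℝ, F 1 = 0 ∧ ∀ x, ∀ y ∈ H, c x y = F x + F y - F (x * y) := by
  classical
  have := Fintype.ofFinite H
  refine ⟨fun x => (∑ z : H, c x z) / Fintype.card H, by simp [hc1], fun x y hy => ?_⟩
  have hcard : (Fintype.card H : ℝ) ≠ 0 := by exact_mod_cast Fintype.card_ne_zero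
  have hsum : ∑ z : H, (c (x * y) z + c x y) = ∑ z : H, (c x (y * z) + c y z) :=
    Finset.sum_congr rfl fun z _ => hc x y z z.2
  have hshift : ∑ z : H, c x (y * z) = ∑ z : H, c x z :=
    Fintype.sum_equiv (Equiv.mulLeft (⟨y, hy⟩ : H)) _ _ fun z => rfl
  rw [Finset.sum_add_distrib, Finset.sum_add_distrib, hshift] at hsum
  simp only [Finset.sum_const, Finset.card_univ, nsmul_eq_mul] at hsum
  field_simp
  linarith

/-- **Corollary 4.18.** Fix `k` and let `h : [0,1] → N̂` be a pointwise-continuous path of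
characters of `N` (a finitely generated abelian normal subgroup of finite index in `G`)
whose stabilizers all have index exactly `k` in `G`.  Let `γ : D → G` be a normalized
section of the quotient map `G → D = G ⧸ N`, with factor set
`ν(d,e) = γ(de)⁻¹ γ(d) γ(e) ∈ N`, and let `D_*` be the stabilizer of `h 0` in `D`
(which coincides with that of `h 1`).  Then the `2`-cocycles `ω_{h 0}` and `ω_{h 1}` are
cohomologous over `D_*`: there is `λ : D → Circle` with `λ 1 = 1` and
`conj (h 1 (ν (d,e))) ⬝ h 0 (ν (d,e)) = λ(de) λ(d)⁻¹ λ(e)⁻¹` for all `d, e ∈ D_*`.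
(On the unit circle, `conj z = z⁻¹`.) -/
theorem path_connected_characters_cohomologous
    (N : Subgroup G) [N.Normal] (habelian : ∀ x y : N, x * y = y * x)
    (hfg : N.FG) [N.FiniteIndex]
    (γ : G ⧸ N → G) (hγ : ∀ d : G ⧸ N, ((γ d : G) : G ⧸ N) = d) (hγ1 : γ 1 = 1)
    (hν : ∀ d e : G ⧸ N, (γ (d * e))⁻¹ * γ d * γ e ∈ N)
    (k : ℕ) (h : unitInterval → (N →* Circle))
    (hcont : ∀ n : N, Continuous fun t : unitInterval => h t n)
    (horbit : ∀ t : unitInterval, (charStab N (h t)).index = k) :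
    ∃ lam : G ⧸ N → Circle, lam 1 = 1 ∧
      ∀ d e : G ⧸ N,
        (∀ n : N, h 0 ⟨(γ d)⁻¹ * (n : G) * γ d, conj_mem_of_normal N (γ d) n⟩ = h 0 n) →
        (∀ n : N, h 0 ⟨(γ e)⁻¹ * (n : G) * γ e, conj_mem_of_normal N (γ e) n⟩ = h 0 n) →
        (h 1 ⟨(γ (d * e))⁻¹ * γ d * γ e, hν d e⟩)⁻¹
            * h 0 ⟨(γ (d * e))⁻¹ * γ d * γ e, hν d e⟩
          = lam (d * e) * (lam d)⁻¹ * (lam e)⁻¹ := by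
  obtain ⟨ψ, hexp, hadd, hinv⟩ := exists_real_lift N h hcont
  have hconst := charStab_path_const N habelian k h hcont horbit
  let H : Subgroup (G ⧸ N) := (charStab N (h 0)).map (QuotientGroup.mk' N)
  have hH : ∀ d : G ⧸ N, d ∈ H → γ d ∈ charStab N (h 0) := by
    rintro d ⟨g, hg, rfl⟩
    have hmem : g⁻¹ * γ (g : G ⧸ N) ∈ N := QuotientGroup.eq.1 (hγ (g : G ⧸ N)).symm
    have := mul_mem hg (le_charStab N habelian (h 0) hmem)
    rwa [mul_inv_cancel_left] at this
  have hψ1 : ψ 1 = 0 := by simpa using hadd 1 1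
  obtain ⟨F, hF1, hF⟩ := exists_coboundary_of_cocycle H
    (fun d e => ψ ⟨(γ (d * e))⁻¹ * γ d * γ e, hν d e⟩)
    (fun x => by
      rw [← hψ1]
      congr 1
      exact Subtype.ext (by simp [hγ1]))
    (fun x y z hz => by
      -- Both sides are `ψ` of `γ(xyz)⁻¹ γ(x) γ(y) γ(z)`, since `ψ` is invariant under `γ(z)`.
      have hzinv := hinv (γ z) (fun t => hconst 0 t ▸ hH z hz) ⟨_, hν x y⟩
      rw [← hzinv, ← hadd, ← hadd]
      congr 1
      exact Subtype.ext (by simp only [Subgroup.coe_mul, mul_assoc x y z]; group))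
  refine ⟨fun d => Circle.exp (F d), by simp [hF1], fun d e _ he => ?_⟩
  have heH : e ∈ H := ⟨γ e, he, hγ e⟩
  have hde := hF d e heH
  have hF' : F (d * e) = F d + F e - ψ ⟨(γ (d * e))⁻¹ * γ d * γ e, hν d e⟩ := by
    rw [hde]; ring
  beta_reduce
  rw [hF', Circle.exp_sub, Circle.exp_add, hexp, div_eq_mul_inv, mul_inv, inv_inv]
  generalize h 1 _ = a
  generalize h 0 _ = b
  generalize Circle.exp (F d) = u
  generalize Circle.exp (F e) = v
  calc a⁻¹ * b = (u * u⁻¹) * (v * v⁻¹) * (a⁻¹ * b) := by simp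
    _ = u * v * (a⁻¹ * b) * u⁻¹ * v⁻¹ := by ac_rfl
end

section
/- Let χ : N → Circle be a character and let D_χ = {d ∈ D : χ(γ(d)⁻¹ n γ(d)) = χ(n) for all n ∈ N} be its stabilizer in D = G/N. Then the function ω_χ(h,k) := conj(χ(ν(h,k))) is a 2-cocycle on D_χ with values in Circle: for all x, y, z ∈ D_χ one has ω_χ(xy, z)·ω_χ(x,y) = ω_χ(x, yz)·ω_χ(y,z), and ω_χ(1,d) = 1 = ω_χ(d,1) for all d ∈ D_χ. (The 2-cocycle property can fail for arguments outside the stabilizer D_χ; this is the construction of the unitary 2-cocycle corresponding to χ in Section 3.1.) -/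
/-!
Expanding `γ(x) γ(y) γ(z)` in the two possible ways gives the identity
`ν(xy, z) · (γ(z)⁻¹ ν(x, y) γ(z)) = ν(x, yz) · ν(y, z)` in `N`. Since `z` stabilizes `χ`,
applying `χ` removes the conjugation by `γ(z)`, and inverting in the commutative group `Circle`
gives the cocycle identity. Normalization follows from `γ(1) = 1`.
-/

variable {G : Type*} [Group G]

/-- **Construction of the unitary 2-cocycle `ω_χ` (Section 3.1).** Let `N` be an abelian
normal subgroup of `G`, `γ : D → G` a normalized section of the quotient map
`G → D = G ⧸ N` with factor set `ν(h,k) = γ(hk)⁻¹ γ(h) γ(k) ∈ N`, and `χ : N → Circle` a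
character with stabilizer `D_χ = {d ∈ D | χ(γ(d)⁻¹ n γ(d)) = χ(n) ∀ n}` in `D`.  Then
`ω_χ(h,k) := conj (χ (ν (h,k)))` is a `2`-cocycle on `D_χ`:
`ω_χ(xy, z) ω_χ(x,y) = ω_χ(x, yz) ω_χ(y,z)` for `x, y, z ∈ D_χ`, and
`ω_χ(1,d) = 1 = ω_χ(d,1)` for `d ∈ D_χ`.  (On the unit circle, `conj z = z⁻¹`.) -/
theorem omega_chi_is_two_cocycle_on_stabilizer
    (N : Subgroup G) [N.Normal] (habelian : ∀ x y : N, x * y = y * x)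
    (γ : G ⧸ N → G) (hγ : ∀ d : G ⧸ N, ((γ d : G) : G ⧸ N) = d) (hγ1 : γ 1 = 1)
    (hν : ∀ h k : G ⧸ N, (γ (h * k))⁻¹ * γ h * γ k ∈ N)
    (χ : N →* Circle) :
    let Dχ : Set (G ⧸ N) :=
      {d : G ⧸ N | ∀ n : N, χ ⟨(γ d)⁻¹ * (n : G) * γ d, conj_mem_of_normal N (γ d) n⟩ = χ n}
    let ω : G ⧸ N → G ⧸ N → Circle :=
      fun h k => (χ ⟨(γ (h * k))⁻¹ * γ h * γ k, hν h k⟩)⁻¹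
    (∀ x ∈ Dχ, ∀ y ∈ Dχ, ∀ z ∈ Dχ, ω (x * y) z * ω x y = ω x (y * z) * ω y z) ∧
      (∀ d ∈ Dχ, ω 1 d = 1 ∧ ω d 1 = 1) := by
  intro Dχ ω
  refine ⟨fun x _ y _ z hz => ?_, fun d _ => ⟨?_, ?_⟩⟩
  · -- Both sides equal `γ(xyz)⁻¹ γ(x) γ(y) γ(z)`.
    have key : (⟨(γ (x * y * z))⁻¹ * γ (x * y) * γ z, hν (x * y) z⟩ : N) *
        ⟨(γ z)⁻¹ * ((γ (x * y))⁻¹ * γ x * γ y) * γ z,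
          conj_mem_of_normal N (γ z) ⟨_, hν x y⟩⟩ =
        ⟨(γ (x * (y * z)))⁻¹ * γ x * γ (y * z), hν x (y * z)⟩ *
          ⟨(γ (y * z))⁻¹ * γ y * γ z, hν y z⟩ := by
      apply Subtype.ext
      simp only [Subgroup.coe_mul, mul_assoc x y z]
      group
    have hχ := congrArg χ key
    rw [map_mul, map_mul, hz ⟨_, hν x y⟩] at hχ
    simp only [ω]
    rw [← mul_inv, ← mul_inv, hχ]
  · have h : (⟨(γ (1 * d))⁻¹ * γ 1 * γ d, hν 1 d⟩ : N) = 1 := by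
      apply Subtype.ext
      simp [hγ1]
    simp only [ω]
    rw [h, map_one, inv_one]
  · have h : (⟨(γ (d * 1))⁻¹ * γ d * γ 1, hν d 1⟩ : N) = 1 := by
      apply Subtype.ext
      simp [hγ1]
    simp only [ω]
    rw [h, map_one, inv_one]
end

section
/- Let χ : N → Circle be a character with stabilizer G_χ = {g ∈ G : χ(g⁻¹ n g) = χ(n) for all n ∈ N}, and define χ* : G_χ → Circle by χ*(x) = χ(γ(q(x))⁻¹ · x) (note γ(q(x))⁻¹ x ∈ N since it maps to 1 under q). Then χ*(1) = 1 and for all x, y ∈ G_χ: χ*(xy) = χ(ν(q(x), q(y))) · χ*(x) · χ*(y). That is, χ* is a 1-dimensional projective ω̄_χ-representation of G_χ, where ω_χ(x,y) = conj(χ(ν(q(x), q(y)))) is the (inflated) unitary 2-cocycle corresponding to χ. (Proposition 3.9.) -/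
/-!
Write `a = γ(q x)⁻¹ x` and `b = γ(q y)⁻¹ y`, both in `N`. In `G` one has
`γ(q(xy))⁻¹ x y = ν(q x, q y) · b · (y⁻¹ a y)`, a product of three elements of `N`.
Applying `χ`, the last factor contributes `χ a` because `y` stabilizes `χ`, and the factors
commute in `Circle`.
-/

open Filter Topology

variable {G : Type*} [Group G]

/-- **Proposition 3.9.** Let `N` be an abelian normal subgroup of `G`, `γ : D → G` a
normalized section of the quotient map `q : G → D = G ⧸ N` with factor set
`ν(h,k) = γ(hk)⁻¹ γ(h) γ(k) ∈ N`, and `χ : N → Circle` a character with stabilizer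
`G_χ`.  Define `χ* : G_χ → Circle` by `χ*(x) = χ (γ(q x)⁻¹ x)`.  Then `χ*(1) = 1` and
`χ*(xy) = χ(ν(q x, q y)) χ*(x) χ*(y)` for all `x, y ∈ G_χ`; that is, `χ*` is a
`1`-dimensional projective `conj ω_χ`-representation of `G_χ`. -/
theorem chiStar_projective_representation
    (N : Subgroup G) [N.Normal] (habelian : ∀ x y : N, x * y = y * x)
    (γ : G ⧸ N → G) (hγ : ∀ d : G ⧸ N, ((γ d : G) : G ⧸ N) = d) (hγ1 : γ 1 = 1)
    (hν : ∀ h k : G ⧸ N, (γ (h * k))⁻¹ * γ h * γ k ∈ N)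
    (hmem : ∀ x : G, (γ ((x : G) : G ⧸ N))⁻¹ * x ∈ N)
    (χ : N →* Circle) :
    χ ⟨(γ (((1 : G) : G ⧸ N)))⁻¹ * 1, hmem 1⟩ = 1 ∧
      ∀ x ∈ charStab N χ, ∀ y ∈ charStab N χ,
        χ ⟨(γ (((x * y : G) : G ⧸ N)))⁻¹ * (x * y), hmem (x * y)⟩
          = χ ⟨(γ (((x : G) : G ⧸ N) * ((y : G) : G ⧸ N)))⁻¹
                * γ ((x : G) : G ⧸ N) * γ ((y : G) : G ⧸ N),
              hν ((x : G) : G ⧸ N) ((y : G) : G ⧸ N)⟩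
            * χ ⟨(γ ((x : G) : G ⧸ N))⁻¹ * x, hmem x⟩
            * χ ⟨(γ ((y : G) : G ⧸ N))⁻¹ * y, hmem y⟩ := by
  refine ⟨?_, fun x _ y hy => ?_⟩
  · have h : (⟨(γ (((1 : G) : G ⧸ N)))⁻¹ * 1, hmem 1⟩ : N) = 1 :=
      Subtype.ext (by simp [hγ1])
    rw [h, map_one]
  · -- With `a = γ(q x)⁻¹ x` and `b = γ(q y)⁻¹ y`: `γ(q(xy))⁻¹ x y = ν(q x, q y) b (y⁻¹ a y)`.
    have h : (⟨(γ (((x * y : G) : G ⧸ N)))⁻¹ * (x * y), hmem (x * y)⟩ : N)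
        = ⟨(γ (((x : G) : G ⧸ N) * ((y : G) : G ⧸ N)))⁻¹
              * γ ((x : G) : G ⧸ N) * γ ((y : G) : G ⧸ N), hν _ _⟩
          * ⟨(γ ((y : G) : G ⧸ N))⁻¹ * y, hmem y⟩
          * ⟨y⁻¹ * ((⟨(γ ((x : G) : G ⧸ N))⁻¹ * x, hmem x⟩ : N) : G) * y,
              conj_mem_of_normal N y _⟩ :=
      Subtype.ext (by simp [mul_assoc])
    rw [h, map_mul, map_mul, hy, mul_right_comm]
end

section
/- Let χ : N → Circle be a character with stabilizer G_χ = {g ∈ G : χ(g⁻¹ n g) = χ(n) for all n ∈ N}, let m ∈ ℕ, and let π^P : G_χ → U(m) be a map satisfying: (a) π^P(x n) = π^P(x) for all x ∈ G_χ and n ∈ N (π^P is inflated from D_χ = G_χ/N); (b) π^P(1) = I; and (c) π^P(xy) = ω_χ(x,y) • (π^P(x)·π^P(y)) for all x, y ∈ G_χ, where ω_χ(x,y) = conj(χ(ν(q(x), q(y)))) (i.e., π^P is a projective ω_χ-representation). Define σ : G_χ → U(m) by σ(x) = χ*(x) • π^P(x), where χ*(x) = χ(γ(q(x))⁻¹ x).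 Then σ is a group homomorphism (an ordinary unitary representation of G_χ), and its restriction to N is χ^{⊕m}: σ(n) = χ(n) • I for all n ∈ N. (The construction underlying Theorem 3.13, producing elements of Ĝ_χ^{(χ)} from projective ω_χ-representations of D_χ.) -/
/-! Write `a = γ(q x)⁻¹ x` and `b = γ(q y)⁻¹ y`, both in `N`. Then
`γ(q(xy))⁻¹ x y = ν(q x, q y) · (γ(q y)⁻¹ a γ(q y)) · b`, and `γ(q y) = y b⁻¹` differs from `y` by
an element of `N`, so for `y ∈ G_χ` the character `χ` takes the same value on the middle factor
as on `a`. Hence `χ*(xy) = χ(ν(q x, q y)) χ*(x) χ*(y)` (`chiStar_mul`), and the factor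
`χ(ν(q x, q y))` cancels against the multiplier `conj χ(ν(q x, q y))` of `π^P`.
On `N`, `χ* = χ` because `γ(1) = 1`, and `π^P = 1` because `π^P` is inflated. -/

open Filter Topology

variable {G : Type*} [Group G]

/-- The coboundary of `χ*` on `G_χ` is `χ ∘ ν`; only the right-hand factor has to stabilize `χ`. -/
theorem chiStar_mul (N : Subgroup G) [N.Normal] (γ : G ⧸ N → G)
    (hν : ∀ h k : G ⧸ N, (γ (h * k))⁻¹ * γ h * γ k ∈ N)
    (hmem : ∀ x : G, (γ ((x : G) : G ⧸ N))⁻¹ * x ∈ N)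
    (χ : N →* Circle) (x y : G) (hy : y ∈ charStab N χ) :
    χ ⟨(γ ((x * y : G) : G ⧸ N))⁻¹ * (x * y), hmem (x * y)⟩
      = χ ⟨(γ ((x : G ⧸ N) * (y : G ⧸ N)))⁻¹ * γ (x : G ⧸ N) * γ (y : G ⧸ N), hν _ _⟩
        * (χ ⟨(γ (x : G ⧸ N))⁻¹ * x, hmem x⟩ * χ ⟨(γ (y : G ⧸ N))⁻¹ * y, hmem y⟩) := by
  set a : N := ⟨(γ (x : G ⧸ N))⁻¹ * x, hmem x⟩ with ha
  set b : N := ⟨(γ (y : G ⧸ N))⁻¹ * y, hmem y⟩ with hb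
  set v : N := ⟨(γ ((x : G ⧸ N) * (y : G ⧸ N)))⁻¹ * γ (x : G ⧸ N) * γ (y : G ⧸ N), hν _ _⟩ with hv
  -- `γ(q y)⁻¹ a γ(q y) · b = b · (y⁻¹ a y)`, since `γ(q y) = y b⁻¹`.
  have key : (⟨(γ ((x * y : G) : G ⧸ N))⁻¹ * (x * y), hmem (x * y)⟩ : N)
      = v * (b * ⟨y⁻¹ * (a : G) * y, conj_mem_of_normal N y a⟩) := by
    apply Subtype.ext
    simp only [ha, hb, hv, Subgroup.coe_mul, QuotientGroup.mk_mul]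
    group
  rw [key, map_mul, map_mul, hy a, mul_comm (χ b)]

/-- **The construction underlying Theorem 3.13.** Let `N` be an abelian normal subgroup
of `G`, `γ : D → G` a normalized section of the quotient map `q : G → D = G ⧸ N` with
factor set `ν ∈ N`, and `χ : N → Circle` a character with stabilizer `G_χ`.  Let
`π^P : G_χ → U(m)` be a projective `ω_χ`-representation inflated from `D_χ = G_χ ⧸ N`,
where `ω_χ(x,y) = conj (χ (ν (q x, q y)))`.  Then `σ := χ* ⬝ π^P` (with
`χ*(x) = χ (γ(q x)⁻¹ x)`) is an ordinary unitary representation of `G_χ` whose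
restriction to `N` is `χ^{⊕ m}`: each `σ(x)` is unitary, `σ(xy) = σ(x) σ(y)` for
`x, y ∈ G_χ`, and `σ(n) = χ(n) • 1` for `n ∈ N`. -/
theorem chiStar_times_projective_is_ordinary_representation
    (N : Subgroup G) [N.Normal] (habelian : ∀ x y : N, x * y = y * x)
    (γ : G ⧸ N → G) (hγ : ∀ d : G ⧸ N, ((γ d : G) : G ⧸ N) = d) (hγ1 : γ 1 = 1)
    (hν : ∀ h k : G ⧸ N, (γ (h * k))⁻¹ * γ h * γ k ∈ N)
    (hmem : ∀ x : G, (γ ((x : G) : G ⧸ N))⁻¹ * x ∈ N)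
    (χ : N →* Circle) (m : ℕ)
    (πP : G → Matrix.unitaryGroup (Fin m) ℂ)
    (hinflated : ∀ x ∈ charStab N χ, ∀ n : N, πP (x * (n : G)) = πP x)
    (hone : πP 1 = 1)
    (hproj : ∀ x ∈ charStab N χ, ∀ y ∈ charStab N χ,
      (πP (x * y) : Matrix (Fin m) (Fin m) ℂ)
        = (starRingEnd ℂ)
              ((χ ⟨(γ (((x : G) : G ⧸ N) * ((y : G) : G ⧸ N)))⁻¹
                    * γ ((x : G) : G ⧸ N) * γ ((y : G) : G ⧸ N),
                  hν ((x : G) : G ⧸ N) ((y : G) : G ⧸ N)⟩ : Circle) : ℂ)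
            • ((πP x : Matrix (Fin m) (Fin m) ℂ) * (πP y : Matrix (Fin m) (Fin m) ℂ))) :
    let σ : G → Matrix (Fin m) (Fin m) ℂ := fun x =>
      ((χ ⟨(γ ((x : G) : G ⧸ N))⁻¹ * x, hmem x⟩ : Circle) : ℂ)
        • (πP x : Matrix (Fin m) (Fin m) ℂ)
    (∀ x : G, σ x ∈ Matrix.unitaryGroup (Fin m) ℂ) ∧
      (∀ x ∈ charStab N χ, ∀ y ∈ charStab N χ, σ (x * y) = σ x * σ y) ∧
      (∀ n : N, σ (n : G) = ((χ n : ℂ)) • (1 : Matrix (Fin m) (Fin m) ℂ)) := by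
  intro σ
  refine ⟨fun x => ?_, fun x hx y hy => ?_, fun n => ?_⟩
  · rw [Matrix.mem_unitaryGroup_iff]
    have hU : (πP x : Matrix (Fin m) (Fin m) ℂ) * star (πP x : Matrix (Fin m) (Fin m) ℂ) = 1 :=
      Matrix.mem_unitaryGroup_iff.mp (πP x).2
    have hc : ∀ z : Circle, (z : ℂ) * star (z : ℂ) = 1 := fun z => by
      rw [Complex.star_def, Complex.mul_conj, Circle.normSq_coe, Complex.ofReal_one]
    simp only [σ, star_smul, smul_mul_smul_comm, hU, hc, one_smul]
  · have hc : ∀ z : Circle, (z : ℂ) * (starRingEnd ℂ) (z : ℂ) = 1 := fun z => by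
      rw [Complex.mul_conj, Circle.normSq_coe, Complex.ofReal_one]
    simp only [σ]
    rw [chiStar_mul N γ hν hmem χ x y hy, hproj x hx y hy, smul_smul, smul_mul_smul_comm]
    congr 1
    rw [Circle.coe_mul, mul_right_comm, hc, one_mul, Circle.coe_mul]
  · have hq : ((n : G) : G ⧸ N) = 1 := (QuotientGroup.eq_one_iff _).mpr n.2
    have hχ : (⟨(γ ((n : G) : G ⧸ N))⁻¹ * (n : G), hmem n⟩ : N) = n :=
      Subtype.ext (by simp [hq, hγ1])
    have hπ : πP (n : G) = 1 := by
      rw [← one_mul (n : G), hinflated 1 (one_mem _) n, hone]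
    simp only [σ, hχ, hπ]
    rfl
end

section
/- Let K be a group, H a subgroup of K, d, m ∈ ℕ, and t : Fin d → K a transversal for the left cosets of H in K (the map i ↦ (t i)H is a bijection from Fin d onto K/H). For a group homomorphism τ : H → U(m), define Ind(τ)(g), for g ∈ K, to be the (dm)×(dm) block matrix whose (i,j) block of size m×m equals τ(t(i)⁻¹·g·t(j)) when t(i)⁻¹·g·t(j) ∈ H and the zero matrix otherwise. Then: (i) Ind(τ)(g) is unitary for every g ∈ K and Ind(τ) : K → U(dm) is a group homomorphism (a concrete matrix model of the induced representation ind_H^K τ); and (ii) if σ_k, σ : H → U(m) are group homomorphisms with σ_k(h) → σ(h) entrywise for every h ∈ H, then Ind(σ_k)(g) → Ind(σ)(g) entrywise for every g ∈ K; i.e., induction preserves pointwise convergence of representations. (Lemma 4.19 in concrete form.) -/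
/-!
The block matrices form a representation because, for each `g` and each column index `j`, exactly
one coset representative `t i` satisfies `t i⁻¹ * g * t j ∈ H`. Hence in the block product
`IndRep g * IndRep g'` only one intermediate block contributes (`IndRep_mul`), and that block
product is `τ` of the product. Since `τ h⁻¹ = (τ h)ᴴ`, taking the conjugate transpose of
`IndRep g` gives `IndRep g⁻¹` (`star_IndRep`), so unitarity follows from multiplicativity.
Convergence holds because whether a block vanishes depends only on `g`, not on the representation.
-/

open Filter Topology

open Classical in
/-- The concrete matrix model of the induced representation `ind_H^K τ`: given a
transversal `t : Fin d → K` of `K ⧸ H` and `τ : H → U(m)`, `IndRep H t τ g` is the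
`(dm) × (dm)` block matrix whose `(i,j)` block of size `m × m` is `τ (t i⁻¹ * g * t j)`
when `t i⁻¹ * g * t j ∈ H` and `0` otherwise. -/
noncomputable def IndRep {K : Type*} [Group K] (H : Subgroup K) {d m : ℕ}
    (t : Fin d → K) (τ : H →* Matrix.unitaryGroup (Fin m) ℂ) (g : K) :
    Matrix (Fin d × Fin m) (Fin d × Fin m) ℂ :=
  Matrix.of fun p q =>
    if hmem : (t p.1)⁻¹ * g * t q.1 ∈ H then
      (τ ⟨(t p.1)⁻¹ * g * t q.1, hmem⟩ : Matrix (Fin m) (Fin m) ℂ) p.2 q.2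
    else 0

theorem IndRep_apply_of_mem {K : Type*} [Group K] (H : Subgroup K) {d m : ℕ}
    (t : Fin d → K) (τ : H →* Matrix.unitaryGroup (Fin m) ℂ) (g : K) (p q : Fin d × Fin m)
    (x : H) (hx : (t p.1)⁻¹ * g * t q.1 = x) :
    IndRep H t τ g p q = (τ x : Matrix (Fin m) (Fin m) ℂ) p.2 q.2 := by
  obtain ⟨x, hxm⟩ := x
  simp only at hx
  subst hx
  simp [IndRep, hxm]

theorem IndRep_apply_of_notMem {K : Type*} [Group K] (H : Subgroup K) {d m : ℕ}
    (t : Fin d → K) (τ : H →* Matrix.unitaryGroup (Fin m) ℂ) (g : K) (p q : Fin d × Fin m)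
    (hx : (t p.1)⁻¹ * g * t q.1 ∉ H) :
    IndRep H t τ g p q = 0 := by
  simp [IndRep, hx]

theorem IndRep_one {K : Type*} [Group K] (H : Subgroup K) {d m : ℕ} (t : Fin d → K)
    (ht : Function.Bijective fun i : Fin d => ((t i : K) : K ⧸ H))
    (τ : H →* Matrix.unitaryGroup (Fin m) ℂ) : IndRep H t τ 1 = 1 := by
  ext ⟨i, a⟩ ⟨j, b⟩
  by_cases hij : i = j
  · subst hij
    rw [IndRep_apply_of_mem H t τ 1 (i, a) (i, b) 1 (by simp)]
    simp [Matrix.one_apply]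
  · rw [IndRep_apply_of_notMem, Matrix.one_apply_ne (by simp [hij])]
    intro h
    exact hij (ht.1 (QuotientGroup.eq.2 (by simpa using h)))

/-- Inverting `t i⁻¹ * g * t j` swaps the block indices and replaces `g` by `g⁻¹`, while `τ` turns
inverses into conjugate transposes. -/
theorem star_IndRep {K : Type*} [Group K] (H : Subgroup K) {d m : ℕ} (t : Fin d → K)
    (τ : H →* Matrix.unitaryGroup (Fin m) ℂ) (g : K) :
    star (IndRep H t τ g) = IndRep H t τ g⁻¹ := by
  ext p q
  rw [Matrix.star_apply]
  have hinv : (t p.1)⁻¹ * g⁻¹ * t q.1 = ((t q.1)⁻¹ * g * t p.1)⁻¹ := by group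
  by_cases h : (t q.1)⁻¹ * g * t p.1 ∈ H
  · rw [IndRep_apply_of_mem H t τ g q p ⟨_, h⟩ rfl,
      IndRep_apply_of_mem H t τ g⁻¹ p q (⟨_, h⟩⁻¹) hinv, map_inv]
    rfl
  · rw [IndRep_apply_of_notMem H t τ g q p h, IndRep_apply_of_notMem, star_zero]
    rwa [hinv, inv_mem_iff]

theorem IndRep_mul {K : Type*} [Group K] (H : Subgroup K) {d m : ℕ} (t : Fin d → K)
    (ht : Function.Bijective fun i : Fin d => ((t i : K) : K ⧸ H))
    (τ : H →* Matrix.unitaryGroup (Fin m) ℂ) (g g' : K) :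
    IndRep H t τ (g * g') = IndRep H t τ g * IndRep H t τ g' := by
  ext p q
  -- `k` is the only index whose block contributes: `t k` represents the coset of `g' * t q.1`.
  obtain ⟨k, hk⟩ := ht.2 ((g' * t q.1 : K) : K ⧸ H)
  have hkH : (t k)⁻¹ * g' * t q.1 ∈ H := by
    simpa [mul_assoc] using QuotientGroup.eq.1 hk
  rw [Matrix.mul_apply, Fintype.sum_prod_type, Finset.sum_eq_single k]
  · have hsplit : (t p.1)⁻¹ * (g * g') * t q.1
        = ((t p.1)⁻¹ * g * t k) * ((t k)⁻¹ * g' * t q.1) := by group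
    by_cases h : (t p.1)⁻¹ * g * t k ∈ H
    · rw [IndRep_apply_of_mem H t τ (g * g') p q (⟨_, h⟩ * ⟨_, hkH⟩) hsplit, map_mul,
        Matrix.UnitaryGroup.mul_val, Matrix.mul_apply]
      refine Finset.sum_congr rfl fun l _ => ?_
      rw [IndRep_apply_of_mem H t τ g p (k, l) ⟨_, h⟩ rfl,
        IndRep_apply_of_mem H t τ g' (k, l) q ⟨_, hkH⟩ rfl]
    · rw [IndRep_apply_of_notMem]
      · refine (Finset.sum_eq_zero fun l _ => ?_).symm
        rw [IndRep_apply_of_notMem H t τ g p (k, l) h, zero_mul]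
      · rwa [hsplit, H.mul_mem_cancel_right hkH]
  · intro j _ hj
    refine Finset.sum_eq_zero fun l _ => ?_
    rw [IndRep_apply_of_notMem H t τ g' (j, l) q, mul_zero]
    intro h
    refine hj (ht.1 (Eq.trans ?_ hk.symm))
    exact QuotientGroup.eq.2 (by simpa [mul_assoc] using h)
  · simp

/-- **Lemma 4.19 in concrete form.** Let `H ≤ K`, `t : Fin d → K` a transversal of the
left cosets of `H` in `K`, and `τ : H → U(m)` a unitary representation.  Then (i) the
block matrix model `IndRep H t τ` is a unitary representation of `K` on `ℂ^{dm}`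
(each value is unitary, and the map is multiplicative with `IndRep H t τ 1 = 1`), and
(ii) if unitary representations `σ_k : H → U(m)` converge entrywise to `σ`, then
`IndRep H t (σ_k) g` converges entrywise to `IndRep H t σ g` for every `g ∈ K`:
induction preserves pointwise convergence of representations. -/
theorem induced_representation_unitary_and_preserves_convergence
    {K : Type*} [Group K] (H : Subgroup K) (d m : ℕ) (t : Fin d → K)
    (ht : Function.Bijective fun i : Fin d => ((t i : K) : K ⧸ H))
    (τ : H →* Matrix.unitaryGroup (Fin m) ℂ)
    (σs : ℕ → (H →* Matrix.unitaryGroup (Fin m) ℂ))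
    (σ : H →* Matrix.unitaryGroup (Fin m) ℂ)
    (hconv : ∀ (h : H) (i j : Fin m),
      Tendsto (fun k => ((σs k h : Matrix (Fin m) (Fin m) ℂ)) i j) atTop
        (𝓝 (((σ h : Matrix (Fin m) (Fin m) ℂ)) i j))) :
    ((∀ g : K, IndRep H t τ g ∈ Matrix.unitaryGroup (Fin d × Fin m) ℂ) ∧
        IndRep H t τ 1 = 1 ∧
        (∀ g g' : K, IndRep H t τ (g * g') = IndRep H t τ g * IndRep H t τ g')) ∧
      (∀ (g : K) (p q : Fin d × Fin m),
        Tendsto (fun k => IndRep H t (σs k) g p q) atTop (𝓝 (IndRep H t σ g p q))) := by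
  refine ⟨⟨fun g => ?_, IndRep_one H t ht τ, IndRep_mul H t ht τ⟩, fun g p q => ?_⟩
  · rw [Matrix.mem_unitaryGroup_iff, star_IndRep, ← IndRep_mul H t ht, mul_inv_cancel,
      IndRep_one H t ht]
  · by_cases h : (t p.1)⁻¹ * g * t q.1 ∈ H
    · simp only [IndRep_apply_of_mem H t _ g p q ⟨_, h⟩ rfl]
      exact hconv _ _ _
    · simp only [IndRep_apply_of_notMem H t _ g p q h]
      exact tendsto_const_nhds
end
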